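/- arXiv:2410.07399 — 4 statements merged into one kernel-verified Lean document; each statement's English description precedes it below -/
import Mathlib

section
/- Fix an integer l ≥ 1. Call a partition an l-core if no box of its Young diagram has hook length divisible by l. Then the map sending a partition λ to the vector (c̄_j(λ) − c̄_{j+1}(λ))_{j ∈ ℤ/lℤ} restricts to a bijection from the set of l-core partitions onto the set of vectors v : ℤ/lℤ → ℤ with Σ_{j ∈ ℤ/lℤ} v_j = 0 (the type A_{l−1} root lattice). -/
/-- The number of boxes of the Young diagram `μ` whose content (row index minus
column index, in 1-indexed terms `a − b`, equivalently `i − j` in Mathlib's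
0-indexed terms) is congruent to `j` modulo `l`. -/
def contentCountMod (l : ℕ) (μ : YoungDiagram) (j : ZMod l) : ℕ :=
  (μ.cells.filter (fun c => (((c.1 : ℤ) - (c.2 : ℤ) : ℤ) : ZMod l) = j)).card

/-- The hook length of a box `c = (i, j)` of `μ`: arm plus leg plus one. -/
def hookLength (μ : YoungDiagram) (c : ℕ × ℕ) : ℕ :=
  (μ.rowLen c.1 - c.2) + (μ.colLen c.2 - c.1) - 1

/-- A Young diagram is an `l`-core if no box has hook length divisible by `l`. -/
def IsCore (l : ℕ) (μ : YoungDiagram) : Prop :=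
  ∀ c ∈ μ.cells, ¬ l ∣ hookLength μ c


/-- beta numbers -/
def bt (μ : YoungDiagram) (i : ℕ) : ℤ := (i : ℤ) - (μ.rowLen i : ℤ)

theorem bt_strictMono (μ : YoungDiagram) : StrictMono (bt μ) := by
  intro a b hab
  have := μ.rowLen_anti a b hab.le
  unfold bt
  omega

theorem bt_eq (μ : YoungDiagram) (i : ℕ) (h : μ.colLen 0 ≤ i) : bt μ i = i := by
  have h1 : (i, 0) ∉ μ := by
    rw [YoungDiagram.mem_iff_lt_colLen]; omega
  rw [YoungDiagram.mem_iff_lt_rowLen] at h1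
  unfold bt
  omega

theorem bt_inj {μ ν : YoungDiagram} (h : Set.range (bt μ) = Set.range (bt ν)) : μ = ν := by
  have h1 := (StrictMono.range_inj (bt_strictMono μ) (bt_strictMono ν)).1 h
  have h2 : ∀ i, μ.rowLen i = ν.rowLen i := by
    intro i
    have := congrFun h1 i
    unfold bt at this
    omega
  ext ⟨i, j⟩
  rw [YoungDiagram.mem_cells, YoungDiagram.mem_cells, YoungDiagram.mem_iff_lt_rowLen,
    YoungDiagram.mem_iff_lt_rowLen, h2]

theorem gap_notMem (μ : YoungDiagram) (j : ℕ) :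
    (μ.colLen j : ℤ) - j - 1 ∉ Set.range (bt μ) := by
  rintro ⟨i, hi⟩
  have h1 := @YoungDiagram.mem_iff_lt_colLen μ i j
  rw [YoungDiagram.mem_iff_lt_rowLen] at h1
  unfold bt at hi
  omega

theorem exists_gap (μ : YoungDiagram) (x : ℤ) (hx : x ∉ Set.range (bt μ)) :
    ∃ j : ℕ, (μ.colLen j : ℤ) - j - 1 = x := by
  classical
  have hex : ∃ i, x < bt μ i := by
    refine ⟨μ.colLen 0 + (x.toNat + 1), ?_⟩
    rw [bt_eq _ _ (by omega)]
    push_cast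
    omega
  obtain ⟨i, hi, hmin⟩ : ∃ i, x < bt μ i ∧ ∀ k < i, ¬ x < bt μ k :=
    ⟨Nat.find hex, Nat.find_spec hex, fun k hk => Nat.find_min hex hk⟩
  have hi' := hi
  unfold bt at hi'
  obtain ⟨j, hj⟩ : ∃ j : ℕ, (j : ℤ) = i - 1 - x := ⟨(i - 1 - x : ℤ).toNat, by omega⟩
  refine ⟨j, ?_⟩
  have h1 : μ.colLen j ≤ i := by
    have h1 := @YoungDiagram.mem_iff_lt_colLen μ i j
    rw [YoungDiagram.mem_iff_lt_rowLen] at h1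
    omega
  have h2 : i ≤ μ.colLen j := by
    rcases i with _ | k
    · omega
    · have h3 := hmin k (by omega)
      have h4 : bt μ k ≠ x := fun h => hx ⟨k, h⟩
      have h1 := @YoungDiagram.mem_iff_lt_colLen μ k j
      rw [YoungDiagram.mem_iff_lt_rowLen] at h1
      unfold bt at h3 h4
      push_cast at hj
      omega
  omega

theorem core_iff (l : ℕ) [NeZero l] (μ : YoungDiagram) :
    IsCore l μ ↔ ∀ x ∈ Set.range (bt μ), x + l ∈ Set.range (bt μ) := by
  have hl : 0 < l := Nat.pos_of_ne_zero (NeZero.ne l)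
  constructor
  · rintro h x ⟨i, rfl⟩
    by_contra hx
    obtain ⟨j, hj⟩ := exists_gap μ _ hx
    have h1 := @YoungDiagram.mem_iff_lt_colLen μ i j
    have h2 := @YoungDiagram.mem_iff_lt_rowLen μ i j
    have h3 : (i, j) ∈ μ := by
      by_contra h3
      rw [h2] at h1 h3
      unfold bt at hj
      omega
    apply h (i, j) ((YoungDiagram.mem_cells _).2 h3)
    have : hookLength μ (i, j) = l := by
      unfold hookLength
      unfold bt at hj
      have := h1.1 h3
      have := h2.1 h3
      simp only
      omega
    rw [this]
  · rintro h ⟨i, j⟩ hc ⟨k, hk⟩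
    have hc' := (YoungDiagram.mem_cells _).1 hc
    have h1 := YoungDiagram.mem_iff_lt_colLen.1 hc'
    have h2 := YoungDiagram.mem_iff_lt_rowLen.1 hc'
    have h3 : ∀ k : ℕ, bt μ i + l * k ∈ Set.range (bt μ) := by
      intro k
      induction k with
      | zero => simp
      | succ k ih =>
        have := h _ ih
        push_cast
        rwa [mul_add, mul_one, ← add_assoc]
    apply gap_notMem μ j
    have h4 := h3 k
    have h5 : (l : ℤ) * k = ((hookLength μ (i, j) : ℕ) : ℤ) := by rw [hk]; push_cast; rfl
    rw [h5] at h4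
    convert h4 using 1
    unfold hookLength bt
    simp only
    omega

theorem contentCount_eq (l : ℕ) (μ : YoungDiagram) (j : ZMod l) (N : ℕ) (hN : μ.colLen 0 ≤ N) :
    (contentCountMod l μ j : ℤ) = ∑ i ∈ Finset.range N, ∑ k ∈ Finset.range (μ.rowLen i),
      if (((i : ℤ) - (k : ℤ) : ℤ) : ZMod l) = j then (1 : ℤ) else 0 := by
  unfold contentCountMod
  rw [Finset.card_filter]
  push_cast
  rw [Finset.sum_finset_product μ.cells (Finset.range N) (fun i => Finset.range (μ.rowLen i))]
  · rintro ⟨i, k⟩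
    rw [YoungDiagram.mem_cells]
    simp only [Finset.mem_range]
    rw [← YoungDiagram.mem_iff_lt_rowLen]
    constructor
    · intro h
      refine ⟨?_, h⟩
      have h1 : (i, 0) ∈ μ := μ.up_left_mem le_rfl (Nat.zero_le _) h
      have := YoungDiagram.mem_iff_lt_colLen.1 h1
      omega
    · exact fun h => h.2

theorem diff_eq (l : ℕ) (μ : YoungDiagram) (j : ZMod l) (N : ℕ) (hN : μ.colLen 0 ≤ N) :
    (contentCountMod l μ j : ℤ) - (contentCountMod l μ (j + 1) : ℤ) =
      (∑ i ∈ Finset.range N, if (((i : ℤ)) : ZMod l) = j then (1 : ℤ) else 0) -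
      ∑ i ∈ Finset.range N, if ((bt μ i : ℤ) : ZMod l) = j then (1 : ℤ) else 0 := by
  rw [contentCount_eq l μ j N hN, contentCount_eq l μ (j+1) N hN, ← Finset.sum_sub_distrib,
    ← Finset.sum_sub_distrib]
  refine Finset.sum_congr rfl fun i _ => ?_
  rw [← Finset.sum_sub_distrib]
  have := Finset.sum_range_sub'
    (fun k : ℕ => if (((i : ℤ) - (k : ℤ) : ℤ) : ZMod l) = j then (1 : ℤ) else 0) (μ.rowLen i)
  simp only [Nat.cast_zero, sub_zero] at this
  unfold bt
  rw [← this]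
  refine Finset.sum_congr rfl fun k _ => ?_
  congr 1
  refine if_congr ?_ rfl rfl
  push_cast
  rw [← sub_sub, sub_eq_iff_eq_add (b := (1 : ZMod l))]

theorem sum_bt (l : ℕ) (f : ℕ → ℤ) (hf : StrictMono f) (j : ZMod l) (N : ℕ) :
    (∑ i ∈ Finset.range N, if ((f i : ℤ) : ZMod l) = j then (1 : ℤ) else 0) =
    (((Finset.range N).image f).filter (fun x : ℤ => (x : ZMod l) = j)).card := by
  rw [Finset.card_filter, Finset.sum_image (fun a _ b _ h => hf.injective h)]
  push_cast
  rfl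

theorem mem_image_range (f : ℕ → ℤ) (hf : StrictMono f) (N : ℕ) (x : ℤ) :
    x ∈ (Finset.range N).image f ↔ x ∈ Set.range f ∧ x < f N := by
  simp only [Finset.mem_image, Finset.mem_range, Set.mem_range]
  constructor
  · rintro ⟨a, ha, rfl⟩
    exact ⟨⟨a, rfl⟩, hf ha⟩
  · rintro ⟨⟨a, rfl⟩, h⟩
    exact ⟨a, hf.lt_iff_lt.1 h, rfl⟩

theorem closed_mul (l : ℕ) (S : Set ℤ) (h : ∀ x ∈ S, x + l ∈ S) (x y : ℤ) (hx : x ∈ S)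
    (hxy : x ≤ y) (hm : (x : ZMod l) = (y : ZMod l)) : y ∈ S := by
  have h3 : ∀ k : ℕ, x + l * k ∈ S := by
    intro k
    induction k with
    | zero => simpa
    | succ k ih =>
      have := h _ ih
      push_cast
      rwa [mul_add, mul_one, ← add_assoc]
  rw [ZMod.intCast_eq_intCast_iff_dvd_sub] at hm
  obtain ⟨k, hk⟩ := hm
  rcases le_or_gt 0 k with h0 | h0
  · have := h3 k.toNat
    rw [Int.toNat_of_nonneg h0, ← hk] at this
    simpa using this
  · have : (l : ℤ) * k ≤ 0 := mul_nonpos_of_nonneg_of_nonpos (by positivity) h0.le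
    have : x = y := by omega
    rwa [← this]

theorem nested (l : ℕ) (S T : Set ℤ) (hS : ∀ x ∈ S, x + l ∈ S) (hT : ∀ x ∈ T, x + l ∈ T)
    (j : ZMod l) : (∀ x ∈ S, (x : ZMod l) = j → x ∈ T) ∨ (∀ x ∈ T, (x : ZMod l) = j → x ∈ S) := by
  by_contra! h
  obtain ⟨⟨x, hx, hxj, hxT⟩, ⟨y, hy, hyj, hyS⟩⟩ := h
  rcases le_total x y with h | h
  · exact hyS (closed_mul l S hS x y hx h (hxj.trans hyj.symm))
  · exact hxT (closed_mul l T hT y x hy h (hyj.trans hxj.symm))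

theorem aux_inj (l : ℕ) [NeZero l] (μ ν : YoungDiagram) (hμ : IsCore l μ) (hν : IsCore l ν)
    (h : ∀ j : ZMod l, (contentCountMod l μ j : ℤ) - (contentCountMod l μ (j + 1) : ℤ) =
      (contentCountMod l ν j : ℤ) - (contentCountMod l ν (j + 1) : ℤ)) : μ = ν := by
  rw [core_iff] at hμ hν
  apply bt_inj
  ext x
  set N := max (max (μ.colLen 0) (ν.colLen 0)) (x.toNat + 1) with hN
  have hNμ : μ.colLen 0 ≤ N := by omega
  have hNν : ν.colLen 0 ≤ N := by omega
  have hx : x < N := by omega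
  have hj := h (x : ZMod l)
  rw [diff_eq l μ _ N hNμ, diff_eq l ν _ N hNν, sum_bt l _ (bt_strictMono μ),
    sum_bt l _ (bt_strictMono ν)] at hj
  have hcard : (((Finset.range N).image (bt μ)).filter (fun y : ℤ => (y : ZMod l) = x)).card =
     (((Finset.range N).image (bt ν)).filter (fun y : ℤ => (y : ZMod l) = x)).card := by omega
  have heq : ((Finset.range N).image (bt μ)).filter (fun y : ℤ => (y : ZMod l) = x) =
     ((Finset.range N).image (bt ν)).filter (fun y : ℤ => (y : ZMod l) = x) := by
    rcases nested l _ _ hμ hν (x : ZMod l) with h1 | h1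
    · apply Finset.eq_of_subset_of_card_le _ hcard.ge
      intro y
      simp only [Finset.mem_filter, mem_image_range _ (bt_strictMono _), bt_eq _ _ hNμ,
        bt_eq _ _ hNν]
      exact fun hy => ⟨⟨h1 y hy.1.1 hy.2, hy.1.2⟩, hy.2⟩
    · symm
      apply Finset.eq_of_subset_of_card_le _ hcard.le
      intro y
      simp only [Finset.mem_filter, mem_image_range _ (bt_strictMono _), bt_eq _ _ hNμ,
        bt_eq _ _ hNν]
      exact fun hy => ⟨⟨h1 y hy.1.1 hy.2, hy.1.2⟩, hy.2⟩
  have := Finset.ext_iff.1 heq x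
  simpa [mem_image_range _ (bt_strictMono _), bt_eq _ _ hNμ, bt_eq _ _ hNν, hx,
    -Finset.mem_image] using this

theorem count_class (l : ℕ) [NeZero l] (v : ZMod l → ℤ) (L M : ℤ) (j : ZMod l)
    (h1 : L ≤ v j) (h2 : v j ≤ M) :
    (((Finset.Ico (l * L) (l * M)).filter
      (fun x : ℤ => v (x : ZMod l) ≤ x / l)).filter (fun x : ℤ => (x : ZMod l) = j)).card
      = M - v j := by
  have hl : (0 : ℤ) < l := by exact_mod_cast Nat.pos_of_ne_zero (NeZero.ne l)
  have hj : (j.val : ℤ) < l := by exact_mod_cast ZMod.val_lt j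
  have hj0 : (0 : ℤ) ≤ j.val := by positivity
  have hdiv : ∀ q : ℤ, (l * q + j.val) / (l : ℤ) = q := by
    intro q
    rw [Int.add_comm, Int.add_mul_ediv_left _ _ hl.ne', Int.ediv_eq_zero_of_lt hj0 hj, zero_add]
  have hcast : ∀ q : ℤ, (((l * q + j.val : ℤ)) : ZMod l) = j := by
    intro q; simp
  have heq : ((Finset.Ico (l * L) (l * M)).filter
      (fun x : ℤ => v (x : ZMod l) ≤ x / l)).filter (fun x : ℤ => (x : ZMod l) = j) =
      (Finset.Ico (v j) M).image (fun q : ℤ => l * q + j.val) := by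
    ext x
    simp only [Finset.mem_filter, Finset.mem_image, Finset.mem_Ico]
    constructor
    · rintro ⟨⟨⟨ha, hb⟩, hc⟩, rfl⟩
      refine ⟨x / l, ⟨hc, Int.ediv_lt_of_lt_mul hl (by rwa [mul_comm])⟩, ?_⟩
      rw [ZMod.val_intCast, Int.mul_ediv_add_emod]
    · rintro ⟨q, ⟨ha, hb⟩, rfl⟩
      rw [hdiv, hcast]
      refine ⟨⟨⟨?_, ?_⟩, ha⟩, rfl⟩ <;> nlinarith
  rw [heq, Finset.card_image_of_injective, Int.card_Ico]
  · omega
  · intro a b hab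
    have := congrArg (fun x : ℤ => x / (l : ℤ)) hab
    simpa only [hdiv] using this

theorem count_total (l : ℕ) [NeZero l] (v : ZMod l → ℤ) (hv : ∑ j, v j = 0) (L M : ℤ)
    (h1 : ∀ j, L ≤ v j) (h2 : ∀ j, v j ≤ M) :
    (((Finset.Ico (l * L) (l * M)).filter
      (fun x : ℤ => v (x : ZMod l) ≤ x / l)).card : ℤ) = l * M := by
  rw [Finset.card_eq_sum_card_fiberwise (f := fun x : ℤ => (x : ZMod l)) (t := Finset.univ)
    (fun _ _ => Finset.mem_coe.2 (Finset.mem_univ _))]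
  push_cast
  rw [Finset.sum_congr rfl (fun j _ => count_class l v L M j (h1 j) (h2 j))]
  rw [Finset.sum_sub_distrib, hv]
  simp [ZMod.card]

/-- diagram from row lengths -/
def mkYD (r : ℕ → ℕ) (hr : Antitone r) (N : ℕ) : YoungDiagram where
  cells := ((Finset.range N) ×ˢ (Finset.range (r 0))).filter (fun c => c.2 < r c.1)
  isLowerSet := by
    rintro ⟨a, b⟩ ⟨c, d⟩ ⟨h1, h2⟩ h
    simp only [Finset.coe_filter, Finset.mem_product, Finset.mem_range, Set.mem_ofPred_eq] at *
    have := hr h1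
    omega

theorem rowLen_mkYD (r : ℕ → ℕ) (hr : Antitone r) (N : ℕ) (h0 : ∀ i, N ≤ i → r i = 0) (i : ℕ) :
    (mkYD r hr N).rowLen i = r i := by
  have h : ∀ j, j < (mkYD r hr N).rowLen i ↔ j < r i := by
    intro j
    rw [← YoungDiagram.mem_iff_lt_rowLen, ← YoungDiagram.mem_cells]
    simp only [mkYD, Finset.mem_filter, Finset.mem_product, Finset.mem_range]
    have := hr (Nat.zero_le i)
    have := h0 i
    omega
  have := h (r i)
  have := h ((mkYD r hr N).rowLen i)
  omega

theorem exists_enum (S : Set ℤ) (lo hi : ℤ) (h1 : ∀ x ∈ S, lo ≤ x) (h2 : ∀ x, hi ≤ x → x ∈ S) :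
    ∃ f : ℕ → ℤ, StrictMono f ∧ Set.range f = S := by
  have hinf : (Set.ofPred fun n : ℕ => lo + n ∈ S).Infinite := by
    apply Set.infinite_of_not_bddAbove
    rintro ⟨b, hb⟩
    have := @hb (b + 1 + (hi - lo).toNat) (h2 _ (by push_cast; omega))
    omega
  refine ⟨fun i => lo + Nat.nth (fun n : ℕ => lo + n ∈ S) i, ?_, ?_⟩
  · intro a b hab
    have := Nat.nth_strictMono hinf hab
    simp only
    omega
  · have hr := Nat.range_nth_of_infinite hinf
    ext x
    constructor
    · rintro ⟨i, rfl⟩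
      exact Nat.nth_mem_of_infinite hinf i
    · intro hx
      have hlo := h1 x hx
      have : (x - lo).toNat ∈ Set.range (Nat.nth (fun n : ℕ => lo + n ∈ S)) := by
        rw [hr]
        simp only [Set.mem_ofPred_eq]
        rw [Int.toNat_of_nonneg (by omega)]
        simpa using hx
      obtain ⟨i, hi⟩ := this
      refine ⟨i, ?_⟩
      simp only [hi]
      omega

theorem strict_step (f : ℕ → ℤ) (hf : StrictMono f) (a k : ℕ) : f a + k ≤ f (a + k) := by
  induction k with
  | zero => simp
  | succ k ih =>
    have := hf (Nat.lt_succ_self (a + k))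
    push_cast
    rw [← add_assoc a k 1]
    simp only [Nat.succ_eq_add_one] at this
    omega

theorem aux_surj (l : ℕ) [NeZero l] (v : ZMod l → ℤ) (hv : ∑ j, v j = 0) :
    ∃ μ : YoungDiagram, IsCore l μ ∧ ∀ j : ZMod l,
      (contentCountMod l μ j : ℤ) - (contentCountMod l μ (j + 1) : ℤ) = v j := by
  have hl : (0 : ℤ) < l := by exact_mod_cast Nat.pos_of_ne_zero (NeZero.ne l)
  obtain ⟨K, hK⟩ : ∃ K : ℕ, ∀ j, |v j| ≤ K := by
    refine ⟨∑ j, (v j).natAbs, fun j => ?_⟩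
    rw [Int.abs_eq_natAbs]
    exact_mod_cast Finset.single_le_sum (f := fun j => (v j).natAbs) (fun _ _ => Nat.zero_le _)
      (Finset.mem_univ j)
  have hL : ∀ j, -(K : ℤ) ≤ v j := fun j => (abs_le.1 (hK j)).1
  have hM : ∀ j, v j ≤ K := fun j => (abs_le.1 (hK j)).2
  set S : Set ℤ := {x : ℤ | v (x : ZMod l) ≤ x / l} with hS
  have hlo : ∀ x ∈ S, (l : ℤ) * (-K) ≤ x := by
    intro x hx
    have h1 : -(K : ℤ) ≤ x / l := (hL _).trans hx
    rw [Int.le_ediv_iff_mul_le hl] at h1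
    linarith
  have hhi : ∀ x : ℤ, (l : ℤ) * K ≤ x → x ∈ S := by
    intro x hx
    refine (hM _).trans ?_
    rw [Int.le_ediv_iff_mul_le hl]
    linarith
  obtain ⟨f, hf, hfr⟩ := exists_enum S _ _ hlo hhi
  have himg : ∀ M n : ℕ, f n = l * M → (Finset.range n).image f =
      (Finset.Ico ((l : ℤ) * (-K)) (l * M)).filter (fun x : ℤ => v (x : ZMod l) ≤ x / l) := by
    intro M n hn
    ext x
    rw [mem_image_range f hf, hfr, hn, Finset.mem_filter, Finset.mem_Ico]
    constructor
    · exact fun h => ⟨⟨hlo x h.1, h.2⟩, h.1⟩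
    · exact fun h => ⟨h.2, h.1.2⟩
  have hfix : ∀ M : ℕ, K ≤ M → f (l * M) = l * M := by
    intro M hKM
    have hKM' : (K : ℤ) ≤ M := by exact_mod_cast hKM
    have h1 : (l : ℤ) * M ∈ Set.range f := by
      rw [hfr]
      exact hhi _ (by nlinarith)
    obtain ⟨n, hn⟩ := h1
    have h2 := count_total l v hv (-K) M hL (fun j => (hM j).trans hKM')
    rw [← himg M n hn, Finset.card_image_of_injective _ hf.injective, Finset.card_range] at h2
    have h3 : n = l * M := by exact_mod_cast h2
    rw [← h3, hn]
  have hl' : 0 < l := Nat.pos_of_ne_zero (NeZero.ne l)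
  have hle : ∀ i : ℕ, f i ≤ i := by
    intro i
    have h1 : i ≤ l * (K + i) := by nlinarith
    obtain ⟨k, hk⟩ := Nat.exists_eq_add_of_le h1
    have h2 := strict_step f hf i k
    rw [← hk, hfix _ (by omega)] at h2
    have h3 : (l : ℤ) * ((K + i : ℕ) : ℤ) = i + k := by exact_mod_cast hk
    omega
  have hge : ∀ i : ℕ, l * K ≤ i → f i = i := by
    intro i hi
    obtain ⟨k, hk⟩ := Nat.exists_eq_add_of_le hi
    have h2 := strict_step f hf (l * K) k
    rw [← hk, hfix _ le_rfl] at h2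
    have h3 : (i : ℤ) = l * K + k := by exact_mod_cast hk
    have := hle i
    omega
  have hanti : Antitone (fun i : ℕ => ((i : ℤ) - f i).toNat) := by
    apply antitone_nat_of_succ_le
    intro i
    have := strict_step f hf i 1
    push_cast at this ⊢
    omega
  set μ := mkYD _ hanti (l * K) with hμ
  have hrow : ∀ i, μ.rowLen i = ((i : ℤ) - f i).toNat :=
    rowLen_mkYD _ hanti (l * K) (fun i hi => by simp only [hge i hi]; simp)
  have hbt : bt μ = f := by
    funext i
    unfold bt
    rw [hrow]
    have := hle i
    omega
  refine ⟨μ, ?_, ?_⟩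
  · rw [core_iff, hbt, hfr]
    intro x hx
    simp only [hS, Set.mem_ofPred_eq] at hx ⊢
    rw [Int.add_ediv_of_dvd_right (dvd_refl _), Int.ediv_self hl.ne']
    push_cast
    rw [ZMod.natCast_self, add_zero]
    omega
  · intro j
    have hNc : μ.colLen 0 ≤ l * (K + μ.colLen 0) := by nlinarith
    have hc : (K : ℤ) ≤ ((K + μ.colLen 0 : ℕ) : ℤ) := by push_cast; omega
    rw [diff_eq l μ j _ hNc, sum_bt l _ (bt_strictMono μ), hbt,
      sum_bt l (fun i => (i : ℤ)) (fun a b h => by simpa using h),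
      himg (K + μ.colLen 0) _ (hfix _ (by omega)),
      count_class l v (-K) _ j (hL j) ((hM j).trans hc)]
    have h0 := count_class l (fun _ => 0) 0 ((K + μ.colLen 0 : ℕ) : ℤ) j le_rfl (by positivity)
    have h1 : (Finset.range (l * (K + μ.colLen 0))).image (fun i : ℕ => (i : ℤ)) =
      (Finset.Ico ((l : ℤ) * 0) (l * ((K + μ.colLen 0 : ℕ) : ℤ))).filter
        (fun x : ℤ => (0 : ℤ) ≤ x / l) := by
      ext x
      rw [mem_image_range _ (fun a b h => by simpa using h), Finset.mem_filter, Finset.mem_Ico]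
      constructor
      · rintro ⟨⟨a, rfl⟩, h⟩
        refine ⟨⟨by simp, by exact_mod_cast h⟩, by positivity⟩
      · rintro ⟨⟨ha, hb⟩, -⟩
        rw [mul_zero] at ha
        refine ⟨⟨x.toNat, Int.toNat_of_nonneg ha⟩, by exact_mod_cast hb⟩
    rw [h1, h0]
    ring

/-- The map `λ ↦ (c̄_j(λ) − c̄_{j+1}(λ))_{j ∈ ℤ/lℤ}` is a bijection from the set of
`l`-core partitions onto the type `A_{l−1}` root lattice, i.e. the set of vectors
`v : ℤ/lℤ → ℤ` with `∑ j, v j = 0`. -/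
theorem core_bijection (l : ℕ) [NeZero l] :
    Set.BijOn
      (fun (μ : YoungDiagram) => fun (j : ZMod l) =>
        (contentCountMod l μ j : ℤ) - (contentCountMod l μ (j + 1) : ℤ))
      {μ : YoungDiagram | IsCore l μ}
      {v : ZMod l → ℤ | ∑ j : ZMod l, v j = 0} := by
  refine ⟨?_, ?_, ?_⟩
  · intro μ _
    simp only [Set.mem_ofPred_eq]
    rw [Finset.sum_sub_distrib, sub_eq_zero]
    exact (Equiv.sum_comp (Equiv.addRight (1 : ZMod l))
      (fun j => (contentCountMod l μ j : ℤ))).symm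
  · intro μ hμ ν hν h
    exact aux_inj l μ ν hμ hν (fun j => congrFun h j)
  · intro v hv
    obtain ⟨μ, h1, h2⟩ := aux_surj l v hv
    exact ⟨μ, h1, funext h2⟩
end

section
/- Fix an integer l ≥ 1. For a partition λ, the following are equivalent: (1) there is a chain of partitions ∅ = μ_0 ⊆ μ_1 ⊆ ⋯ ⊆ μ_k = λ (inclusion of Young diagrams) such that each difference μ_{t+1} \ μ_t is a border strip of size l; (2) the counts c̄_j(λ) of boxes of λ with content ≡ j (mod l) are equal for all j ∈ ℤ/lℤ (equivalently, each equals |λ|/l). In other words, a partition has empty l-core if and only if its boxes are equidistributed among the l content residue classes. -/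
/-- Two boxes are adjacent if they differ by `1` in exactly one coordinate. -/
def Adjacent (c d : ℕ × ℕ) : Prop :=
  (c.1 = d.1 ∧ (c.2 + 1 = d.2 ∨ d.2 + 1 = c.2)) ∨
    (c.2 = d.2 ∧ (c.1 + 1 = d.1 ∨ d.1 + 1 = c.1))

/-- A finite set of boxes is connected: any two of its boxes are joined by a path of
boxes of the set in which consecutive boxes are adjacent. -/
def ConnectedCells (D : Finset (ℕ × ℕ)) : Prop :=
  ∀ c ∈ D, ∀ d ∈ D,
    Relation.ReflTransGen (fun x y => x ∈ D ∧ y ∈ D ∧ Adjacent x y) c d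

/-- A finite set of boxes contains no 2×2 square. -/
def NoSquare (D : Finset (ℕ × ℕ)) : Prop :=
  ¬ ∃ a b : ℕ, (a, b) ∈ D ∧ (a + 1, b) ∈ D ∧ (a, b + 1) ∈ D ∧ (a + 1, b + 1) ∈ D

/-- `lam \ μ` is a border strip (rim hook) of size `s`: `μ ⊆ lam`, and the difference
is a nonempty set of `s` boxes containing no 2×2 square and connected. -/
def IsBorderStrip (μ lam : YoungDiagram) (s : ℕ) : Prop :=
  μ ≤ lam ∧ (lam.cells \ μ.cells).Nonempty ∧ (lam.cells \ μ.cells).card = s ∧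
    NoSquare (lam.cells \ μ.cells) ∧ ConnectedCells (lam.cells \ μ.cells)

namespace EC

/-- the beta numbers -/
def beta (lam : YoungDiagram) (a : ℕ) : ℤ := (lam.rowLen a : ℤ) - a

theorem skew_inj {μ lam : YoungDiagram} (hsq : NoSquare (lam.cells \ μ.cells))
    {c d : ℕ × ℕ} (hc : c ∈ lam.cells \ μ.cells) (hd : d ∈ lam.cells \ μ.cells)
    (h : (c.1 : ℤ) - c.2 = (d.1 : ℤ) - d.2) : c = d := by
  wlog hlt : c.1 ≤ d.1 generalizing c d
  · exact (this hd hc h.symm (by omega)).symm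
  obtain ⟨a, b⟩ := c
  obtain ⟨a', b'⟩ := d
  simp only at h hlt
  by_contra hne
  have h1 : a + 1 ≤ a' := by
    rcases Nat.lt_or_ge a a' with h1 | h1
    · exact h1
    · exact absurd (Prod.ext (by simp; omega) (by simp; omega)) hne
  have h2 : b + 1 ≤ b' := by omega
  simp only [Finset.mem_sdiff, YoungDiagram.mem_cells] at hc hd
  apply hsq
  refine ⟨a, b, ?_, ?_, ?_, ?_⟩ <;>
    simp only [Finset.mem_sdiff, YoungDiagram.mem_cells] <;>
    refine ⟨lam.up_left_mem (by omega) (by omega) hd.1,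
      fun hh => hc.2 (μ.up_left_mem (by omega) (by omega) hh)⟩

theorem conn_ivt {D : Finset (ℕ × ℕ)} {c d : ℕ × ℕ} (hc : c ∈ D)
    (h : Relation.ReflTransGen (fun x y => x ∈ D ∧ y ∈ D ∧ Adjacent x y) c d) :
    ∀ z : ℤ, (c.1 : ℤ) - c.2 ≤ z → z ≤ (d.1 : ℤ) - d.2 →
      ∃ e ∈ D, (e.1 : ℤ) - e.2 = z := by
  induction h with
  | refl => intro z h1 h2; exact ⟨c, hc, by omega⟩
  | @tail e f _ hef ih =>
    intro z h1 h2
    obtain ⟨_, hf, hadj⟩ := hef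
    by_cases hz : z ≤ (e.1 : ℤ) - e.2
    · exact ih z h1 hz
    · refine ⟨f, hf, ?_⟩
      unfold Adjacent at hadj
      omega

theorem strip_count (l : ℕ) [NeZero l] {μ lam : YoungDiagram} (h : IsBorderStrip μ lam l)
    (j : ZMod l) : contentCountMod l lam j = contentCountMod l μ j + 1 := by
  obtain ⟨hle, -, hcard, hsq, hconn⟩ := h
  set D := lam.cells \ μ.cells with hD
  have hl : 0 < l := Nat.pos_of_ne_zero (NeZero.ne l)
  have key : ∀ c ∈ D, ∀ d ∈ D, (c.1 : ℤ) - c.2 < (d.1 : ℤ) - d.2 →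
      (((c.1 : ℤ) - c.2 : ℤ) : ZMod l) = (((d.1 : ℤ) - d.2 : ℤ) : ZMod l) → False := by
    intro c hc d hd hlt heq
    rw [ZMod.intCast_eq_intCast_iff_dvd_sub] at heq
    have h1 : (l : ℤ) ≤ (d.1 : ℤ) - d.2 - ((c.1 : ℤ) - c.2) :=
      Int.le_of_dvd (by omega) heq
    have h2 : Finset.Icc ((c.1 : ℤ) - c.2) ((c.1 : ℤ) - c.2 + l) ⊆
        D.image (fun e : ℕ × ℕ => (e.1 : ℤ) - e.2) := by
      intro z hz
      rw [Finset.mem_Icc] at hz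
      obtain ⟨e, he, hez⟩ := conn_ivt hc (hconn c hc d hd) z hz.1 (by omega)
      exact Finset.mem_image.2 ⟨e, he, hez⟩
    have h3 := (Finset.card_le_card h2).trans Finset.card_image_le
    rw [hcard, Int.card_Icc] at h3
    omega
  have inj : Set.InjOn (fun e : ℕ × ℕ => (((e.1 : ℤ) - e.2 : ℤ) : ZMod l)) (D : Set (ℕ × ℕ)) := by
    intro c hc d hd heq
    rcases lt_trichotomy ((c.1 : ℤ) - c.2) ((d.1 : ℤ) - d.2) with h | h | h
    · exact (key c hc d hd h heq).elim
    · exact skew_inj hsq hc hd h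
    · exact (key d hd c hc h heq.symm).elim
  have himg : D.image (fun e : ℕ × ℕ => (((e.1 : ℤ) - e.2 : ℤ) : ZMod l)) = Finset.univ := by
    apply Finset.eq_univ_of_card
    rw [Finset.card_image_of_injOn inj, hcard, ZMod.card]
  have hone : (D.filter (fun c => (((c.1 : ℤ) - (c.2 : ℤ) : ℤ) : ZMod l) = j)).card = 1 := by
    have hj : j ∈ D.image (fun e : ℕ × ℕ => (((e.1 : ℤ) - e.2 : ℤ) : ZMod l)) := by
      rw [himg]; exact Finset.mem_univ _
    obtain ⟨e, he, hej⟩ := Finset.mem_image.1 hj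
    rw [Finset.card_eq_one]
    refine ⟨e, ?_⟩
    ext f
    rw [Finset.mem_filter, Finset.mem_singleton]
    constructor
    · rintro ⟨hf, hfj⟩
      exact inj hf he (hfj.trans hej.symm)
    · rintro rfl
      exact ⟨he, hej⟩
  unfold contentCountMod
  have hun : lam.cells = μ.cells ∪ D := by
    rw [hD, Finset.union_sdiff_of_subset (YoungDiagram.cells_subset_iff.2 hle)]
  rw [hun, Finset.filter_union, Finset.card_union_of_disjoint, hone]
  exact Finset.disjoint_filter_filter Finset.disjoint_sdiff

theorem count_sum (l : ℕ) (lam : YoungDiagram) (n : ℕ) (hn : lam.colLen 0 ≤ n) (j : ZMod l) :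
    (contentCountMod l lam j : ℤ) = ∑ a ∈ Finset.range n, ∑ b ∈ Finset.range (lam.rowLen a),
      if (((a : ℤ) - (b : ℤ) : ℤ) : ZMod l) = j then 1 else 0 := by
  unfold contentCountMod
  rw [Finset.card_filter]
  push_cast
  rw [Finset.sum_finset_product lam.cells (Finset.range n)
    (fun a => Finset.range (lam.rowLen a))]
  rintro ⟨a, b⟩
  simp only [YoungDiagram.mem_cells, Finset.mem_range, YoungDiagram.mem_iff_lt_rowLen]
  constructor
  · intro h
    refine ⟨?_, h⟩
    have h1 : (a, b) ∈ lam := YoungDiagram.mem_iff_lt_rowLen.2 h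
    have h2 : (a, 0) ∈ lam := lam.up_left_mem le_rfl (Nat.zero_le _) h1
    exact lt_of_lt_of_le (YoungDiagram.mem_iff_lt_colLen.1 h2) hn
  · exact fun h => h.2

theorem count_diff (l : ℕ) (lam : YoungDiagram) (n : ℕ) (hn : lam.colLen 0 ≤ n) (j : ZMod l) :
    (contentCountMod l lam j : ℤ) - contentCountMod l lam (j + 1) =
      ((Finset.range n).filter (fun a : ℕ => (((a : ℤ) : ℤ) : ZMod l) = j)).card -
      ((Finset.range n).filter (fun a : ℕ => ((-beta lam a : ℤ) : ZMod l) = j)).card := by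
  rw [count_sum l lam n hn, count_sum l lam n hn, Finset.card_filter, Finset.card_filter]
  push_cast
  rw [← Finset.sum_sub_distrib, ← Finset.sum_sub_distrib]
  apply Finset.sum_congr rfl
  intro a _
  rw [← Finset.sum_sub_distrib]
  have := Finset.sum_range_sub'
    (fun b : ℕ => if (((a : ℤ) - (b : ℤ) : ℤ) : ZMod l) = j then (1 : ℤ) else 0) (lam.rowLen a)
  have e : ∀ b : ℕ, ((((a : ℤ) - ((b + 1 : ℕ) : ℤ) : ℤ) : ZMod l) = j) ↔
      ((((a : ℤ) - (b : ℤ) : ℤ) : ZMod l) = j + 1) := by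
    intro b
    push_cast
    constructor <;> intro h
    · rw [← h]; ring
    · rw [← sub_sub, h]; ring
  simp only [e] at this
  unfold beta
  push_cast at this ⊢
  rw [neg_sub]
  simpa using this

theorem beta_lt (lam : YoungDiagram) {a b : ℕ} (h : a < b) : beta lam b < beta lam a := by
  have := lam.rowLen_anti a b h.le
  unfold beta; omega

theorem rowLen_zero (lam : YoungDiagram) {a : ℕ} (h : lam.colLen 0 ≤ a) : lam.rowLen a = 0 := by
  by_contra hne
  have : (a, 0) ∈ lam := YoungDiagram.mem_iff_lt_rowLen.2 (Nat.pos_of_ne_zero hne)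
  have := YoungDiagram.mem_iff_lt_colLen.1 this
  omega

theorem exists_bead (l : ℕ) [NeZero l] (lam : YoungDiagram) (hne : lam ≠ ⊥)
    (heq : ∀ j j' : ZMod l, contentCountMod l lam j = contentCountMod l lam j') :
    ∃ a, ∀ b, beta lam b ≠ beta lam a - l := by
  by_contra! hcl
  have hl : 0 < l := Nat.pos_of_ne_zero (NeZero.ne l)
  have h0 : 0 < lam.rowLen 0 := by
    by_contra h0
    apply hne
    ext ⟨a, b⟩
    rw [YoungDiagram.mem_cells, YoungDiagram.mem_cells]
    simp only [YoungDiagram.notMem_bot, iff_false]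
    rw [YoungDiagram.mem_iff_lt_rowLen]
    have := lam.rowLen_anti 0 a (Nat.zero_le _)
    omega
  set n := lam.colLen 0 with hn
  set x := beta lam 0 with hx
  have hx0 : 0 < x := by rw [hx]; unfold beta; omega
  have down : ∀ k : ℕ, ∃ b, beta lam b = x - k * l := by
    intro k
    induction k with
    | zero => exact ⟨0, by simp [hx]⟩
    | succ k ih =>
      obtain ⟨b, hb⟩ := ih
      obtain ⟨c, hc⟩ := hcl b
      exact ⟨c, by rw [hc, hb]; push_cast; ring⟩
  have hd := count_diff l lam n le_rfl ((-x : ℤ) : ZMod l)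
  rw [heq _ ((((-x : ℤ) : ZMod l)) + 1), sub_self] at hd
  set S := (Finset.range n).filter (fun a : ℕ => (((a : ℤ) : ℤ) : ZMod l) = ((-x : ℤ) : ZMod l))
  set T := (Finset.range n).filter
    (fun a : ℕ => ((-beta lam a : ℤ) : ZMod l) = ((-x : ℤ) : ZMod l)) with hT
  have hn0 : 0 < n := by
    by_contra h
    have := rowLen_zero lam (a := 0) (by omega)
    omega
  have hsub : insert x (S.image (fun a : ℕ => -(a : ℤ))) ⊆ T.image (beta lam) := by
    intro y hy
    rw [Finset.mem_insert, Finset.mem_image] at hy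
    rw [Finset.mem_image]
    rcases hy with rfl | ⟨a, ha, rfl⟩
    · exact ⟨0, by simp [hT, hn0, ← hx], rfl⟩
    · rw [Finset.mem_filter, Finset.mem_range, ZMod.intCast_eq_intCast_iff_dvd_sub] at ha
      obtain ⟨han, k, hk⟩ := ha
      have hk0 : k ≤ 0 := by
        by_contra hk1
        have : 0 < (l : ℤ) * k := mul_pos (by omega) (by omega)
        omega
      obtain ⟨b, hb⟩ := down k.natAbs
      have hk2 : ((k.natAbs : ℕ) : ℤ) = -k := by omega
      have hb' : beta lam b = -(a : ℤ) := by
        rw [hb, hk2]; linarith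
      refine ⟨b, ?_, hb'⟩
      rw [hT, Finset.mem_filter, Finset.mem_range, hb']
      constructor
      · by_contra hbn
        have := rowLen_zero lam (a := b) (by omega)
        unfold beta at hb'
        omega
      · rw [ZMod.intCast_eq_intCast_iff_dvd_sub]
        exact ⟨k, by linarith⟩
  have h1 := (Finset.card_le_card hsub).trans Finset.card_image_le
  rw [Finset.card_insert_of_notMem, Finset.card_image_of_injective] at h1
  · omega
  · intro a b h; simpa using h
  · rw [Finset.mem_image]
    rintro ⟨a, _, h⟩
    omega

theorem exists_strip (l : ℕ) [NeZero l] (lam : YoungDiagram) (a : ℕ)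
    (ha : ∀ b, beta lam b ≠ beta lam a - l) : ∃ μ, IsBorderStrip μ lam l := by
  have hl : 0 < l := Nat.pos_of_ne_zero (NeZero.ne l)
  set x := beta lam a with hx
  set D := lam.cells.filter (fun c : ℕ × ℕ => (c.1 + 1, c.2 + 1) ∉ lam ∧
    x - l ≤ (c.2 : ℤ) - c.1 ∧ (c.2 : ℤ) - c.1 < x) with hD
  have memD : ∀ i j : ℕ, (i, j) ∈ D ↔ j < lam.rowLen i ∧ lam.rowLen (i + 1) ≤ j + 1 ∧
      x - l ≤ (j : ℤ) - i ∧ (j : ℤ) - i < x := by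
    intro i j
    simp [hD, YoungDiagram.mem_iff_lt_rowLen]
  have low : IsLowerSet ((lam.cells \ D : Finset (ℕ × ℕ)) : Set (ℕ × ℕ)) := by
    rintro ⟨i, j⟩ ⟨i', j'⟩ hle hm
    obtain ⟨hi, hj⟩ := Prod.mk_le_mk.1 hle
    rw [Finset.mem_coe, Finset.mem_sdiff, YoungDiagram.mem_cells] at hm ⊢
    obtain ⟨hm1, hm2⟩ := hm
    have hm1' := lam.up_left_mem hi hj hm1
    refine ⟨hm1', fun hd => hm2 ?_⟩
    rw [memD] at hd ⊢
    rw [YoungDiagram.mem_iff_lt_rowLen] at hm1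
    obtain ⟨h1, h2, h3, h4⟩ := hd
    have han := lam.rowLen_anti i' i hi
    have han' := lam.rowLen_anti (i' + 1) (i + 1) (by omega)
    refine ⟨hm1, by omega, ?_, ?_⟩
    · by_contra hlt
      rcases Nat.lt_or_ge i' i with hii | hii
      · have hjj : j = j' := by
          have := lam.rowLen_anti (i' + 1) i (by omega)
          omega
        subst hjj
        -- the row i0 with j - i0 = x - l
        obtain ⟨i0, hi0⟩ : ∃ i0 : ℕ, (i0 : ℤ) = j - (x - l) :=
          ⟨((j : ℤ) - (x - l)).toNat, by omega⟩
        apply ha (i0 + 1)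
        have e1 := lam.rowLen_anti (i' + 1) (i0 + 1) (by omega)
        have e2 := lam.rowLen_anti (i0 + 1) i (by omega)
        unfold beta
        push_cast
        omega
      · omega
    · by_contra hge
      have hii : i' = i := by
        by_contra hne
        have := lam.rowLen_anti (i' + 1) i (by omega)
        omega
      subst hii
      have h5 : x < beta lam i' := by unfold beta; omega
      have h6 : i' < a := by
        by_contra h
        rcases Nat.eq_or_lt_of_le (Nat.le_of_not_lt h) with h | h
        · subst h; omega
        · have := beta_lt lam h
          omega
      have h7 := lam.rowLen_anti (i' + 1) a (by omega)
      unfold beta at hx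
      omega
  let μ : YoungDiagram := ⟨lam.cells \ D, low⟩
  have hDs : lam.cells \ μ.cells = D := by
    change lam.cells \ (lam.cells \ D) = D
    exact Finset.sdiff_sdiff_eq_self (Finset.filter_subset _ _)
  have hsq : NoSquare D := by
    rintro ⟨i, j, h1, _, _, h4⟩
    rw [memD] at h1 h4
    omega
  have hinj : ∀ c ∈ D, ∀ d ∈ D, (c.2 : ℤ) - c.1 = (d.2 : ℤ) - d.1 → c = d := by
    intro c hc d hd h
    rw [← hDs] at hc hd hsq
    exact skew_inj hsq hc hd (by omega)
  have hpos : 0 < lam.rowLen a := by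
    by_contra h
    apply ha (a + l)
    have := lam.rowLen_anti a (a + l) (by omega)
    rw [hx]
    unfold beta
    push_cast
    omega
  set s : ℕ × ℕ := (a, lam.rowLen a - 1) with hs
  have hsD : s ∈ D := by
    rw [hs, memD]
    have := lam.rowLen_anti a (a + 1) (by omega)
    unfold beta at hx
    omega
  set R := fun x y : ℕ × ℕ => x ∈ D ∧ y ∈ D ∧ Adjacent x y with hR
  have main : ∀ k : ℕ, k < l → ∃ c ∈ D, (c.2 : ℤ) - c.1 = x - 1 - k ∧
      Relation.ReflTransGen R s c := by
    intro k
    induction k with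
    | zero =>
      intro _
      refine ⟨s, hsD, ?_, .refl⟩
      rw [hs]
      unfold beta at hx
      simp only
      omega
    | succ k ih =>
      intro hk
      obtain ⟨⟨i, j⟩, hc, hcont, hp⟩ := ih (by omega)
      simp only at hcont
      have hc' := hc
      rw [memD] at hc'
      by_cases hdown : j < lam.rowLen (i + 1)
      · have hnew : (i + 1, j) ∈ D := by
          rw [memD]
          have := lam.rowLen_anti (i + 1) (i + 1 + 1) (by omega)
          push_cast
          omega
        refine ⟨_, hnew, by push_cast; omega, hp.tail ⟨hc, hnew, ?_⟩⟩
        unfold Adjacent; simp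
      · have hj : 0 < j := by
          by_contra hj
          obtain ⟨m, hm⟩ : ∃ m : ℕ, (m : ℤ) = -(x - l) := ⟨(-(x - l)).toNat, by omega⟩
          apply ha m
          have := lam.rowLen_anti (i + 1) m (by omega)
          unfold beta
          omega
        have hnew : (i, j - 1) ∈ D := by
          rw [memD]
          omega
        refine ⟨_, hnew, by push_cast; omega, hp.tail ⟨hc, hnew, ?_⟩⟩
        unfold Adjacent
        exact Or.inl ⟨rfl, Or.inr (Nat.sub_add_cancel hj)⟩
  have hreach : ∀ c ∈ D, Relation.ReflTransGen R s c := by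
    rintro ⟨i, j⟩ hc
    have hc' := hc
    rw [memD] at hc'
    obtain ⟨d, hd, hdc, hp⟩ := main (x - 1 - ((j : ℤ) - i)).toNat (by omega)
    have : (i, j) = d := hinj _ hc d hd (by simp only; omega)
    rw [this]; exact hp
  have hsymm : Std.Symm R := by
    constructor
    rintro c d ⟨h1, h2, h3⟩
    refine ⟨h2, h1, ?_⟩
    unfold Adjacent at h3 ⊢
    omega
  refine ⟨μ, ?_, ?_, ?_, ?_, ?_⟩
  · exact YoungDiagram.cells_subset_iff.1 (Finset.sdiff_subset : lam.cells \ D ⊆ lam.cells)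
  · rw [hDs]; exact ⟨s, hsD⟩
  · rw [hDs]
    have himg : D.image (fun c : ℕ × ℕ => (c.2 : ℤ) - c.1) = Finset.Ico (x - l) x := by
      ext z
      rw [Finset.mem_image, Finset.mem_Ico]
      constructor
      · rintro ⟨⟨i, j⟩, hc, rfl⟩
        exact ((memD i j).1 hc).2.2
      · intro hz
        obtain ⟨d, hd, hdc, _⟩ := main (x - 1 - z).toNat (by omega)
        exact ⟨d, hd, by omega⟩
    rw [← Finset.card_image_of_injOn (s := D) (fun c hc d hd h => hinj c hc d hd h), himg,
      Int.card_Ico]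
    omega
  · rw [hDs]; exact hsq
  · rw [hDs]
    intro c hc d hd
    exact ((Relation.ReflTransGen.stdSymm (r := R)).symm _ _ (hreach c hc)).trans (hreach d hd)

theorem build (l : ℕ) [NeZero l] : ∀ (N : ℕ) (lam : YoungDiagram), lam.cells.card = N →
    (∀ j j' : ZMod l, contentCountMod l lam j = contentCountMod l lam j') →
    (∃ (k : ℕ) (μ : Fin (k + 1) → YoungDiagram),
        μ 0 = ⊥ ∧ μ (Fin.last k) = lam ∧
          ∀ t : Fin k, IsBorderStrip (μ t.castSucc) (μ t.succ) l) := by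
  intro N
  induction N using Nat.strong_induction_on with
  | _ N ih =>
    intro lam hN heq
    by_cases hne : lam = ⊥
    · exact ⟨0, fun _ => ⊥, rfl, hne.symm, fun t => t.elim0⟩
    obtain ⟨a, ha⟩ := exists_bead l lam hne heq
    obtain ⟨ν, hν⟩ := exists_strip l lam a ha
    have hc : ν.cells.card < N := by
      have h1 := Finset.card_sdiff_add_card_eq_card (YoungDiagram.cells_subset_iff.2 hν.1)
      have h2 := hν.2.1.card_pos
      omega
    obtain ⟨k, μ, h0, hlast, hstep⟩ := ih _ hc ν rfl (by
      intro j j'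
      have := heq j j'
      rw [strip_count l hν, strip_count l hν] at this
      omega)
    refine ⟨k + 1, Fin.snoc μ lam, ?_, ?_, ?_⟩
    · rw [← h0, ← Fin.castSucc_zero, Fin.snoc_castSucc (α := fun _ => YoungDiagram)]
    · exact Fin.snoc_last (α := fun _ => YoungDiagram) _ _
    · intro t
      rw [Fin.snoc_castSucc (α := fun _ => YoungDiagram)]
      induction t using Fin.lastCases with
      | last =>
        rw [Fin.succ_last, Fin.snoc_last (α := fun _ => YoungDiagram), hlast]
        exact hν
      | cast t =>
        rw [Fin.succ_castSucc, Fin.snoc_castSucc (α := fun _ => YoungDiagram)]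
        exact hstep t

end EC

/-- A partition can be built from the empty partition by successively adding border
strips of size `l` if and only if its boxes are equidistributed among the `l`
content residue classes mod `l` (i.e. it has empty `l`-core). -/
theorem emptyCore_iff_equidistributed (l : ℕ) [NeZero l] (lam : YoungDiagram) :
    (∃ (k : ℕ) (μ : Fin (k + 1) → YoungDiagram),
        μ 0 = ⊥ ∧ μ (Fin.last k) = lam ∧
          ∀ t : Fin k, IsBorderStrip (μ t.castSucc) (μ t.succ) l) ↔
      ∀ j j' : ZMod l, contentCountMod l lam j = contentCountMod l lam j' := by
  constructor
  · rintro ⟨k, μ, h0, rfl, hstep⟩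
    have : ∀ t : Fin (k + 1), ∀ j j' : ZMod l,
        contentCountMod l (μ t) j = contentCountMod l (μ t) j' := by
      intro t
      induction t using Fin.induction with
      | zero => intro j j'; rw [h0]; simp [contentCountMod]
      | succ t ih =>
        intro j j'
        rw [EC.strip_count l (hstep t), EC.strip_count l (hstep t), ih j j']
    exact this _
  · exact EC.build l _ lam rfl
end

section
/- Fix an integer l ≥ 1, a field F, and elements t_1, t_2 ∈ F with t_1^{ln} ≠ 1 and t_2^{ln} ≠ 1 for all integers n ≥ 1 (so that Γ_{t_1} and Γ_{t_2} are invertible). Let neg be the unique F-algebra endomorphism of R with neg(p_{i,n}) = p_{−i,n}. Then for every i ∈ ℤ/lℤ and n ≥ 1, (neg ∘ Γ_{t_2}^{−1} ∘ neg ∘ Γ_{t_1}^{−1} ∘ neg)(p_{i,n}) = ((1 − t_1^{ln})(1 − t_2^{ln}))^{−1} Σ_{j=0}^{l−1} Σ_{k=0}^{l−1} t_1^{nj} t_2^{nk} p_{−i−j+k, n}. (This is the generator-level identity underlying the wreath Cauchy kernel for the deformed Hall pairing.) -/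
open MvPolynomial

/-- The matrix plethysm `Γ_x`: the unique `F`-algebra endomorphism of the polynomial
algebra on the colored power sums `p_{i,n}` (indexed by `i ∈ ℤ/lℤ`, `n ≥ 1`) with
`Γ_x(p_{i,n}) = p_{i,n} − x^n p_{i−1,n}`. -/
noncomputable def Gamma (l : ℕ) (F : Type*) [Field F] (x : F) :
    MvPolynomial (ZMod l × ℕ+) F →ₐ[F] MvPolynomial (ZMod l × ℕ+) F :=
  aeval (fun p : ZMod l × ℕ+ =>
    X p - C (x ^ (p.2 : ℕ)) * X (p.1 - 1, p.2))

/-- The `F`-algebra endomorphism `neg` with `neg(p_{i,n}) = p_{−i,n}`. -/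
noncomputable def negMap (l : ℕ) (F : Type*) [Field F] :
    MvPolynomial (ZMod l × ℕ+) F →ₐ[F] MvPolynomial (ZMod l × ℕ+) F :=
  aeval (fun p : ZMod l × ℕ+ => X (-p.1, p.2))

lemma gammaInv_X (l : ℕ) (F : Type*) [Field F] (x : F)
    (hx : ∀ n : ℕ, 1 ≤ n → x ^ (l * n) ≠ 1)
    (G : MvPolynomial (ZMod l × ℕ+) F →ₐ[F] MvPolynomial (ZMod l × ℕ+) F)
    (hG : G.comp (Gamma l F x) = AlgHom.id F _) (i : ZMod l) (n : ℕ+) :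
    G (X (i, n)) = C ((1 - x ^ (l * (n : ℕ)))⁻¹) *
      ∑ j ∈ Finset.range l, C (x ^ ((n : ℕ) * j)) * X (i - (j : ZMod l), n) := by
  have hne : (1 - x ^ (l * (n : ℕ))) ≠ 0 := sub_ne_zero.mpr (hx n n.pos).symm
  set S : MvPolynomial (ZMod l × ℕ+) F :=
    ∑ j ∈ Finset.range l, C (x ^ ((n : ℕ) * j)) * X (i - (j : ZMod l), n) with hS
  have key : Gamma l F x S = C (1 - x ^ (l * (n : ℕ))) * X (i, n) := by
    have tel := Finset.sum_range_sub' (fun j : ℕ =>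
      (C (x ^ ((n : ℕ) * j)) * X (i - (j : ZMod l), n) : MvPolynomial (ZMod l × ℕ+) F)) l
    rw [hS, map_sum]
    refine Eq.trans (Finset.sum_congr rfl (fun j _ => ?_)) (tel.trans ?_)
    · show _ = (C (x ^ ((n : ℕ) * j)) * X (i - (j : ZMod l), n) : MvPolynomial (ZMod l × ℕ+) F)
        - C (x ^ ((n : ℕ) * (j + 1))) * X (i - ((j + 1 : ℕ) : ZMod l), n)
      have e : i - ((j + 1 : ℕ) : ZMod l) = i - (j : ZMod l) - 1 := by push_cast; ring
      rw [e, map_mul, mul_add, pow_add, C_mul]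
      simp only [Gamma, aeval_X, algHom_C, algebraMap_eq, mul_one]
      ring
    · simp only [mul_zero, pow_zero, Nat.cast_zero, sub_zero, CharP.cast_eq_zero, C_1, C_sub]
      rw [mul_comm (n : ℕ) l]
      ring
  have h := DFunLike.congr_fun hG S
  rw [AlgHom.comp_apply, key, map_mul, algHom_C, algebraMap_eq, AlgHom.id_apply] at h
  rw [← h, ← mul_assoc, ← C_mul, inv_mul_cancel₀ hne, C_1, one_mul]

/-- The generator-level identity underlying the wreath Cauchy kernel:
`(neg ∘ Γ_{t₂}⁻¹ ∘ neg ∘ Γ_{t₁}⁻¹ ∘ neg)(p_{i,n})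
  = ((1−t₁^{ln})(1−t₂^{ln}))⁻¹ ∑_{j,k=0}^{l−1} t₁^{nj} t₂^{nk} p_{−i−j+k,n}`,
where `Γ_{t₁}⁻¹, Γ_{t₂}⁻¹` denote two-sided inverses of `Γ_{t₁}, Γ_{t₂}`
(which exist since `t₁^{ln} ≠ 1 ≠ t₂^{ln}` for all `n ≥ 1`). -/
theorem neg_gammaInv_identity (l : ℕ) (hl : 0 < l) (F : Type*) [Field F]
    (t1 t2 : F)
    (h1 : ∀ n : ℕ, 1 ≤ n → t1 ^ (l * n) ≠ 1)
    (h2 : ∀ n : ℕ, 1 ≤ n → t2 ^ (l * n) ≠ 1)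
    (G1inv G2inv : MvPolynomial (ZMod l × ℕ+) F →ₐ[F] MvPolynomial (ZMod l × ℕ+) F)
    (hG1 : (Gamma l F t1).comp G1inv = AlgHom.id F _ ∧
      G1inv.comp (Gamma l F t1) = AlgHom.id F _)
    (hG2 : (Gamma l F t2).comp G2inv = AlgHom.id F _ ∧
      G2inv.comp (Gamma l F t2) = AlgHom.id F _)
    (i : ZMod l) (n : ℕ+) :
    negMap l F (G2inv (negMap l F (G1inv (negMap l F (X (i, n)))))) =
      C (((1 - t1 ^ (l * (n : ℕ))) * (1 - t2 ^ (l * (n : ℕ))))⁻¹) *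
        ∑ j ∈ Finset.range l, ∑ k ∈ Finset.range l,
          C (t1 ^ ((n : ℕ) * j) * t2 ^ ((n : ℕ) * k)) *
            X (-i - (j : ZMod l) + (k : ZMod l), n) := by
  have hn : ∀ a : ZMod l, negMap l F (X (a, n)) = X (-a, n) := fun a => by
    simp [negMap]
  rw [hn, gammaInv_X l F t1 h1 G1inv hG1.2]
  simp only [map_mul, map_sum, algHom_C, algebraMap_eq, hn, gammaInv_X l F t2 h2 G2inv hG2.2,
    mul_inv, Finset.mul_sum]
  refine Finset.sum_congr rfl (fun j _ => Finset.sum_congr rfl (fun k _ => ?_))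
  have e : -(-(-i - (j : ZMod l)) - (k : ZMod l)) = -i - (j : ZMod l) + (k : ZMod l) := by ring
  rw [e]
  ring
end

section
/- Fix an integer l ≥ 1. For a Maya diagram m and 0 ≤ i ≤ l − 1, define m^{(i)} : ℤ → {1, −1} by m^{(i)}(k) = m(i + kl). Then each m^{(i)} is a Maya diagram, the map m ↦ (m^{(0)}, …, m^{(l−1)}) is a bijection from the set of Maya diagrams onto the set of l-tuples of Maya diagrams, and charge(m) = Σ_{i=0}^{l−1} charge(m^{(i)}). In particular this map restricts to a bijection between Maya diagrams of charge zero and l-tuples of Maya diagrams whose charges sum to zero. -/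
/-- A Maya diagram: a function `m : ℤ → {1, −1}` (encoded as `ℤ → ℤ` taking only the
values `1` and `−1`) which is eventually `1` to the left and eventually `−1` to the
right. -/
def IsMaya (m : ℤ → ℤ) : Prop :=
  (∀ k : ℤ, m k = 1 ∨ m k = -1) ∧
    (∃ N : ℤ, ∀ k : ℤ, k < N → m k = 1) ∧
    (∃ N : ℤ, ∀ k : ℤ, N < k → m k = -1)

/-- The charge of a Maya diagram:
`#{k < 0 : m k = −1} − #{k ≥ 0 : m k = 1}`. -/
noncomputable def charge (m : ℤ → ℤ) : ℤ :=
  ({k : ℤ | k < 0 ∧ m k = -1}.ncard : ℤ) - ({k : ℤ | 0 ≤ k ∧ m k = 1}.ncard : ℤ)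

/-- The `i`-th component of the `l`-fold splitting of `m`:
`m^{(i)}(k) = m(i + kl)`. -/
def mayaSplit (l : ℕ) (m : ℤ → ℤ) (i : Fin l) : ℤ → ℤ :=
  fun k => m ((i : ℤ) + k * l)

theorem ncard_split (l : ℕ) (hl : 0 < l) (S : Set ℤ) (hS : S.Finite) :
    S.ncard = ∑ i : Fin l, {k : ℤ | (i : ℤ) + k * l ∈ S}.ncard := by
  have hl' : (0 : ℤ) < l := by exact_mod_cast hl
  have hinj : ∀ i : Fin l, Function.Injective (fun k : ℤ => (i : ℤ) + k * l) := by
    intro i a b h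
    have h2 : a * (l : ℤ) = b * l := by simpa using h
    exact mul_right_cancel₀ hl'.ne' h2
  have hfin : ∀ i : Fin l, Finite {k : ℤ | (i : ℤ) + k * l ∈ S} := by
    intro i
    exact (hS.preimage ((hinj i).injOn)).to_subtype
  have e : (Σ i : Fin l, {k : ℤ | (i : ℤ) + k * l ∈ S}) ≃ S := by
    refine Equiv.ofBijective (fun p => ⟨(p.1 : ℤ) + p.2.1 * l, p.2.2⟩) ⟨?_, ?_⟩
    · rintro ⟨i, k, hk⟩ ⟨j, k', hk'⟩ h
      have h1 : (i : ℤ) + k * l = j + k' * l := by simpa using h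
      have hij : i = j := by
        have h3 := congrArg (· % (l : ℤ)) h1
        simp only [Int.add_mul_emod_self_right] at h3
        rw [Int.emod_eq_of_lt (by positivity) (by exact_mod_cast i.2),
          Int.emod_eq_of_lt (by positivity) (by exact_mod_cast j.2)] at h3
        exact Fin.ext (by exact_mod_cast h3)
      subst hij
      have : k = k' := hinj i h1
      subst this
      rfl
    · rintro ⟨n, hn⟩
      have h0 := Int.emod_nonneg n hl'.ne'
      have h1 := Int.emod_lt_of_pos n hl'
      have h2 : (((n % l).toNat : ℕ) : ℤ) + n / l * l = n := by
        rw [Int.toNat_of_nonneg h0]; exact Int.emod_add_ediv_mul n l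
      exact ⟨⟨⟨(n % l).toNat, by omega⟩, ⟨n / l, by simpa only [Set.mem_setOf_eq, h2] using hn⟩⟩,
        Subtype.ext h2⟩
  rw [← Nat.card_coe_set_eq, ← Nat.card_congr e, Nat.card_sigma]
  rfl

theorem charge_split (l : ℕ) (hl : 0 < l) (m : ℤ → ℤ) (hm : IsMaya m) :
    charge m = ∑ i : Fin l, charge (mayaSplit l m i) := by
  obtain ⟨-, ⟨A, hA⟩, ⟨B, hB⟩⟩ := hm
  have hl' : (0 : ℤ) < l := by exact_mod_cast hl
  have f1 : {k : ℤ | k < 0 ∧ m k = -1}.Finite := by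
    refine (Set.finite_Ico A 0).subset ?_
    rintro k ⟨h, h'⟩
    refine ⟨?_, h⟩
    by_contra hc
    have := hA k (by omega)
    omega
  have f2 : {k : ℤ | 0 ≤ k ∧ m k = 1}.Finite := by
    refine (Set.finite_Icc 0 B).subset ?_
    rintro k ⟨h, h'⟩
    refine ⟨h, ?_⟩
    by_contra hc
    have := hB k (by omega)
    omega
  have key : ∀ (i : Fin l) (k : ℤ), (i : ℤ) + k * l < 0 ↔ k < 0 := by
    intro i k
    have hi : (i : ℤ) < l := by exact_mod_cast i.2
    have hi0 : (0 : ℤ) ≤ i := by positivity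
    constructor
    · intro h
      by_contra hc
      push Not at hc
      nlinarith [mul_nonneg hc hl'.le]
    · intro h
      nlinarith
  unfold charge
  rw [ncard_split l hl _ f1, ncard_split l hl _ f2]
  push_cast
  rw [← Finset.sum_sub_distrib]
  refine Finset.sum_congr rfl fun i _ => ?_
  simp only [Set.mem_setOf_eq, key, mayaSplit, ← not_lt]

theorem maya_split (l : ℕ) (hl : 0 < l) (m : ℤ → ℤ) (hm : IsMaya m) (i : Fin l) :
    IsMaya (mayaSplit l m i) := by
  obtain ⟨h, ⟨A, hA⟩, ⟨B, hB⟩⟩ := hm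
  have hl' : (0 : ℤ) < l := by exact_mod_cast hl
  have hi : (i : ℤ) < l := by exact_mod_cast i.2
  have hi0 : (0 : ℤ) ≤ i := by positivity
  refine ⟨fun k => h _, ⟨-|A| - 1, fun k hk => hA _ ?_⟩, ⟨|B|, fun k hk => hB _ ?_⟩⟩
  · have := neg_abs_le A
    have := abs_nonneg A
    nlinarith
  · have := le_abs_self B
    have := abs_nonneg B
    nlinarith

theorem maya_bij (l : ℕ) (hl : 0 < l) :
    Set.BijOn (mayaSplit l) {m : ℤ → ℤ | IsMaya m}
        {t : Fin l → ℤ → ℤ | ∀ i, IsMaya (t i)} := by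
  have hl' : (0 : ℤ) < l := by exact_mod_cast hl
  have hlt : ∀ n : ℤ, (n % l).toNat < l := fun n => by
    have h0 := Int.emod_nonneg n hl'.ne'
    have h1 := Int.emod_lt_of_pos n hl'
    omega
  have h2 : ∀ n : ℤ, (((n % l).toNat : ℕ) : ℤ) + n / l * l = n := fun n => by
    rw [Int.toNat_of_nonneg (Int.emod_nonneg n hl'.ne')]; exact Int.emod_add_ediv_mul n l
  refine ⟨fun m hm i => maya_split l hl m hm i, ?_, ?_⟩
  · intro m _ m' _ h
    funext n
    have := congrFun (congrFun h ⟨(n % l).toNat, hlt n⟩) (n / l)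
    simpa only [mayaSplit, h2] using this
  · intro t ht
    choose h A B using ht
    choose A hA using A
    choose B hB using B
    refine ⟨fun n => t ⟨(n % l).toNat, hlt n⟩ (n / l), ⟨fun k => h _ _, ?_, ?_⟩, ?_⟩
    · obtain ⟨M, hM⟩ := (Set.finite_range A).bddBelow
      refine ⟨M * l, fun k hk => hA _ _ (lt_of_lt_of_le ?_ (hM ⟨_, rfl⟩))⟩
      exact Int.ediv_lt_of_lt_mul hl' hk
    · obtain ⟨M, hM⟩ := (Set.finite_range B).bddAbove
      refine ⟨(M + 1) * l, fun k hk => hB _ _ (lt_of_le_of_lt (hM ⟨_, rfl⟩) ?_)⟩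
      have := (Int.le_ediv_iff_mul_le hl').2 hk.le
      omega
    · funext i k
      have hi : (i : ℤ) < l := by exact_mod_cast i.2
      have hi0 : (0 : ℤ) ≤ i := by positivity
      have e1 : ((i : ℤ) + k * l) % l = i := by
        rw [Int.add_mul_emod_self_right, Int.emod_eq_of_lt hi0 hi]
      have e2 : ((i : ℤ) + k * l) / l = k := by
        rw [Int.add_mul_ediv_right _ _ hl'.ne', Int.ediv_eq_zero_of_lt hi0 hi, zero_add]
      simp [mayaSplit, e1, e2]

/-- For `l ≥ 1`: each component `m^{(i)}` of a Maya diagram is a Maya diagram, the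
splitting `m ↦ (m^{(0)}, …, m^{(l−1)})` is a bijection from Maya diagrams onto
`l`-tuples of Maya diagrams, the charge of `m` is the sum of the charges of its
components, and in particular the splitting restricts to a bijection between
charge-zero Maya diagrams and `l`-tuples of Maya diagrams whose charges sum to
zero. -/
theorem mayaSplit_bijection (l : ℕ) (hl : 0 < l) :
    (∀ m : ℤ → ℤ, IsMaya m → ∀ i : Fin l, IsMaya (mayaSplit l m i)) ∧
      Set.BijOn (mayaSplit l) {m : ℤ → ℤ | IsMaya m}
        {t : Fin l → ℤ → ℤ | ∀ i, IsMaya (t i)} ∧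
      (∀ m : ℤ → ℤ, IsMaya m → charge m = ∑ i : Fin l, charge (mayaSplit l m i)) ∧
      Set.BijOn (mayaSplit l) {m : ℤ → ℤ | IsMaya m ∧ charge m = 0}
        {t : Fin l → ℤ → ℤ | (∀ i, IsMaya (t i)) ∧ ∑ i : Fin l, charge (t i) = 0} := by
  refine ⟨maya_split l hl, maya_bij l hl, charge_split l hl, ?_⟩
  obtain ⟨h1, h2, h3⟩ := maya_bij l hl
  refine ⟨fun m hm => ⟨h1 hm.1, ?_⟩, h2.mono fun m hm => hm.1, ?_⟩
  · rw [← charge_split l hl m hm.1]; exact hm.2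
  · rintro t ⟨ht, hs⟩
    obtain ⟨m, hm, rfl⟩ := h3 ht
    exact ⟨m, ⟨hm, by rw [charge_split l hl m hm]; exact hs⟩, rfl⟩
end
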